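/- Suppose every irreducible component of Φ is of type A. Let I ⊆ Δ and λ ∈ Λ_I⁺. Then Σ_{β∈Ψ_λ⁺} θ(s_βλ) = 0 in the free ℤ-module on h* if and only if Ψ_λ⁺⁺ = ∅. -/

import Mathlib

open scoped RealInnerProductSpace
open Classical

noncomputable section

namespace JantzenGVM

variable {V : Type*} [NormedAddCommGroup V] [InnerProductSpace ℝ V] [FiniteDimensional ℝ V]

/-- The coroot `α^∨ = 2α/⟨α,α⟩` of a vector `α` (junk value `0` when `α = 0`). -/
def coroot (α : V) : V := (2 / ⟪α, α⟫) • α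

/-- The linear functional `v ↦ ⟨v, α^∨⟩`. -/
def corootForm (α : V) : V →ₗ[ℝ] ℝ where
  toFun v := ⟪v, coroot α⟫
  map_add' x y := by simp [inner_add_left]
  map_smul' c x := by simp [inner_smul_left]

lemma corootForm_self {α : V} (h : ⟪α, α⟫ ≠ 0) : corootForm α α = 2 := by
  simp only [corootForm, coroot, LinearMap.coe_mk, AddHom.coe_mk, real_inner_smul_right]
  field_simp

/-- The reflection `s_α` as a linear automorphism of `V` (the identity when `⟨α,α⟩ = 0`). -/
def reflV (α : V) : V ≃ₗ[ℝ] V :=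
  if h : ⟪α, α⟫ = 0 then LinearEquiv.refl ℝ V
  else Module.reflection (corootForm_self h)

/-- `h* = ℂ ⊗ V`, realized as the space of real-linear functionals `V → ℂ` via the
inner product; an element `λ` pairs with a root `α` by `⟨λ, α⟩ = λ α` and with the
coroot by `⟨λ, α^∨⟩ = λ (coroot α)`. -/
abbrev HStar (V : Type*) [NormedAddCommGroup V] [InnerProductSpace ℝ V] := V →ₗ[ℝ] ℂ

/-- The canonical embedding of `V` into `h*`. -/
def emb (α : V) : HStar V where
  toFun v := (⟪α, v⟫ : ℂ)
  map_add' x y := by simp [inner_add_right]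
  map_smul' c x := by simp [inner_smul_right, Complex.real_smul]

/-- The action of a linear automorphism `w` of `V` on `h*`: `(w • λ)(v) = λ(w⁻¹ v)`. -/
def wAct (w : V ≃ₗ[ℝ] V) (l : HStar V) : HStar V := l ∘ₗ (w.symm : V →ₗ[ℝ] V)

/-- The reflection `s_β λ = λ - ⟨λ, β^∨⟩ β` acting on `h*`. -/
def sRefl (β : V) (l : HStar V) : HStar V := l - l (coroot β) • emb β

/-- The group generated by the reflections in the elements of `Φ'`. -/
def weyl (Φ' : Set V) : Subgroup (V ≃ₗ[ℝ] V) :=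
  Subgroup.closure {w | ∃ α ∈ Φ', w = reflV α}

/-- A finite, reduced, crystallographic root system spanning the Euclidean space `V`,
together with a choice of positive system and the corresponding simple system. -/
structure RootSys (V : Type*) [NormedAddCommGroup V] [InnerProductSpace ℝ V]
    [FiniteDimensional ℝ V] where
  Φ : Finset V
  pos : Finset V
  Δ : Finset V
  ne_zero : ∀ α ∈ Φ, α ≠ (0 : V)
  span_eq_top : Submodule.span ℝ (Φ : Set V) = ⊤
  reduced : ∀ α ∈ Φ, ∀ c : ℝ, c • α ∈ Φ → c = 1 ∨ c = -1
  refl_mem : ∀ α ∈ Φ, ∀ β ∈ Φ, reflV α β ∈ Φ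
  crystallographic : ∀ α ∈ Φ, ∀ β ∈ Φ, ∃ n : ℤ, ⟪β, coroot α⟫ = (n : ℝ)
  pos_subset : pos ⊆ Φ
  mem_pos_or : ∀ α ∈ Φ, α ∈ pos ∨ -α ∈ pos
  not_both : ∀ α ∈ pos, -α ∉ pos
  simple_subset : Δ ⊆ pos
  simple_indep : LinearIndependent ℝ (fun x : {a : V // a ∈ Δ} => x.1)
  simple_gen : ∀ β ∈ pos, ∃ c : V → ℝ, (∀ α ∈ Δ, 0 ≤ c α) ∧ β = ∑ α ∈ Δ, c α • α

/-- A subsystem of the root system: a subset of `Φ` closed under its own reflections. -/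
def IsSubsystem (S : RootSys V) (Φ' : Set V) : Prop :=
  Φ' ⊆ (S.Φ : Set V) ∧ ∀ α ∈ Φ', ∀ β ∈ Φ', reflV α β ∈ Φ'

/-- The length of `w`, i.e. the number of positive roots sent to negative roots
(this equals the Coxeter length for elements of the Weyl group). -/
def len (S : RootSys V) (w : V ≃ₗ[ℝ] V) : ℕ :=
  {β ∈ (S.pos : Set V) | w β ∉ (S.pos : Set V)}.ncard

/-- `Φ_I = ℤI ∩ Φ`, the subsystem generated by a subset `I` of the simple roots. -/
def PhiI (S : RootSys V) (I : Finset V) : Set V :=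
  {α ∈ (S.Φ : Set V) | α ∈ Submodule.span ℤ (I : Set V)}

/-- `z` is a positive integer. -/
def IsPosInt (z : ℂ) : Prop := ∃ n : ℤ, 0 < n ∧ z = (n : ℂ)

/-- `z` is an integer. -/
def IsInt (z : ℂ) : Prop := ∃ n : ℤ, z = (n : ℂ)

/-- `Λ_I⁺ = {λ ∈ h* : ⟨λ, α^∨⟩ ∈ ℤ_{>0} for all α ∈ I}`. -/
def LambdaP (I : Set V) : Set (HStar V) :=
  {l | ∀ α ∈ I, IsPosInt (l (coroot α))}

/-- `Λ⁺(Φ'', Φ') = {ν ∈ ℂΦ' : ⟨ν, α^∨⟩ ∈ ℤ_{>0} for all α ∈ Φ'' ∩ Φ⁺}`. -/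
def LambdaPSub (S : RootSys V) (Φ'' Φ' : Set V) : Set (HStar V) :=
  {l | l ∈ Submodule.span ℂ (emb '' Φ') ∧
       ∀ α ∈ Φ'' ∩ (S.pos : Set V), IsPosInt (l (coroot α))}

/-- `λ` is `Φ''`-regular: `⟨λ, α⟩ ≠ 0` for all `α ∈ Φ''`. -/
def IsRegularOn (Φ'' : Set V) (l : HStar V) : Prop := ∀ α ∈ Φ'', l α ≠ 0

/-- `Ψ⁺(λ, Φ'', Φ') = {β ∈ (Φ' ∩ Φ⁺) \ Φ'' : ⟨λ, β^∨⟩ ∈ ℤ_{>0}}`. -/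
def PsiP (S : RootSys V) (Φ'' Φ' : Set V) (l : HStar V) : Set V :=
  {β | β ∈ Φ' ∩ (S.pos : Set V) ∧ β ∉ Φ'' ∧ IsPosInt (l (coroot β))}

/-- `Ψ⁺⁺(λ, Φ'', Φ') = {β ∈ Ψ⁺(λ, Φ'', Φ') : s_β λ is Φ''-regular}`. -/
def PsiPP (S : RootSys V) (Φ'' Φ' : Set V) (l : HStar V) : Set V :=
  {β ∈ PsiP S Φ'' Φ' l | ∀ α ∈ Φ'', (sRefl β l) α ≠ 0}

/-- The sign function: `sgn(λ, μ) = (-1)^{ℓ(w)}` if `λ, μ` are `Φ''`-regular and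
`μ = wλ` for some `w ∈ W(Φ'')`, and `0` otherwise. -/
def sgnW (S : RootSys V) (Φ'' : Set V) (l m : HStar V) : ℤ :=
  if h : IsRegularOn Φ'' l ∧ IsRegularOn Φ'' m ∧ ∃ w, w ∈ weyl Φ'' ∧ m = wAct w l
  then (-1) ^ len S h.2.2.choose else 0

/-- The Jantzen coefficient `c(λ, μ, Φ'', Φ') = Σ_{β ∈ Ψ⁺⁺(λ,Φ'',Φ')} sgn(s_β λ, μ)`. -/
def jc (S : RootSys V) (Φ'' Φ' : Set V) (l m : HStar V) : ℤ :=
  ∑ᶠ β ∈ PsiPP S Φ'' Φ' l, sgnW S Φ'' (sRefl β l) m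

/-- The symmetrized Jantzen coefficient `c̃(λ, μ, Φ'', Φ')`. -/
def jcSym (S : RootSys V) (Φ'' Φ' : Set V) (l m : HStar V) : ℤ :=
  jc S Φ'' Φ' l m + jc S Φ'' Φ' m l

/-- `θ(λ) = Σ_{w ∈ W_I} (-1)^{ℓ(w)} e^{wλ}` in the free `ℤ`-module on `h*`. -/
def theta (S : RootSys V) (I : Finset V) (l : HStar V) : HStar V →₀ ℤ :=
  ∑ᶠ w ∈ (weyl (PhiI S I) : Set (V ≃ₗ[ℝ] V)),
    Finsupp.single (wAct w l) ((-1) ^ len S w)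

/-- `Φ_λ = {α ∈ Φ : ⟨λ, α⟩ = 0}`. -/
def singSet (S : RootSys V) (l : HStar V) : Set V :=
  {α ∈ (S.Φ : Set V) | l α = 0}

/-- `Φ_{[λ]} = {α ∈ Φ : ⟨λ, α^∨⟩ ∈ ℤ}`. -/
def integralSet (S : RootSys V) (l : HStar V) : Set V :=
  {α ∈ (S.Φ : Set V) | IsInt (l (coroot α))}

/-- `(ℚ A) ∩ Φ`, the intersection of the rational span of `A` with `Φ`.
Taking `A = Φ_I ∪ {β}` gives `Φ_{β,1}`; taking `A = Φ_λ ∪ {β}` gives `Φ_{β,2}`. -/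
def ratSpanRoots (S : RootSys V) (A : Set V) : Set V :=
  {γ ∈ (S.Φ : Set V) | ∃ (t : Finset V) (c : V → ℚ),
    (t : Set V) ⊆ A ∧ γ = ∑ α ∈ t, (c α : ℝ) • α}

/-- `Φ_{β,0}`, the irreducible component of `Φ` containing `β`. -/
def component (S : RootSys V) (β : V) : Set V :=
  {γ ∈ (S.Φ : Set V) |
    Relation.ReflTransGen
      (fun x y => x ∈ (S.Φ : Set V) ∧ y ∈ (S.Φ : Set V) ∧ ⟪x, y⟫ ≠ 0) β γ}

/-- `λ|_{Φ'}`: the unique element of `ℂΦ'` with `⟨λ|_{Φ'}, α^∨⟩ = ⟨λ, α^∨⟩`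
for all `α ∈ Φ'`. -/
def restrictW (Φ' : Set V) (l : HStar V) : HStar V :=
  letI : Nonempty (HStar V) := ⟨0⟩
  Classical.epsilon fun m =>
    m ∈ Submodule.span ℂ (emb '' Φ') ∧ ∀ α ∈ Φ', m (coroot α) = l (coroot α)

/-- `ᴵWᴶ = {w ∈ W : ℓ(uwv) = ℓ(u) + ℓ(w) + ℓ(v) for all u ∈ W_I, v ∈ W_J}`. -/
def doubleCoset (S : RootSys V) (I J : Finset V) : Set (V ≃ₗ[ℝ] V) :=
  {w | w ∈ weyl (S.Φ : Set V) ∧ ∀ u ∈ weyl (PhiI S I), ∀ v ∈ weyl (PhiI S J),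
    len S (u * w * v) = len S u + len S w + len S v}

/-- The fundamental weight `ϖ_j` relative to an enumeration `e` of the simple roots:
the unique element of `h*` with `⟨ϖ_j, α_k^∨⟩ = δ_{jk}`. -/
def fundWeight {n : ℕ} (e : Fin n → V) (j : Fin n) : HStar V :=
  letI : Nonempty (HStar V) := ⟨0⟩
  Classical.epsilon fun m => ∀ k : Fin n, m (coroot (e k)) = if k = j then 1 else 0

/-- The labels of the irreducible Dynkin types. -/
inductive LieType | A | B | C | D | E | F | G
deriving DecidableEq

/-- The Cartan matrix of type `A_n` (1-based indices): entry `(i,j)` is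
`⟨α_i, α_j^∨⟩`. -/
def cartanA (i j : ℕ) : ℤ :=
  if i = j then 2 else if i + 1 = j ∨ j + 1 = i then -1 else 0

/-- The Cartan matrices of the irreducible types in the standard (Bourbaki/Humphreys)
numbering of the Dynkin diagram: `cartanEntry t n i j = ⟨α_i, α_j^∨⟩` (1-based). -/
def cartanEntry : LieType → ℕ → ℕ → ℕ → ℤ
  | .A, _, i, j => cartanA i j
  | .B, n, i, j => if i + 1 = n ∧ j = n then -2 else cartanA i j
  | .C, n, i, j => if i = n ∧ j + 1 = n then -2 else cartanA i j
  | .D, n, i, j =>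
      if i = j then 2
      else if (i + 2 = n ∧ j = n) ∨ (i = n ∧ j + 2 = n) then -1
      else if (i + 1 = n ∧ j = n) ∨ (i = n ∧ j + 1 = n) then 0
      else cartanA i j
  | .E, _, i, j =>
      if i = j then 2
      else if (i = 1 ∧ j = 3) ∨ (i = 3 ∧ j = 1) ∨ (i = 2 ∧ j = 4) ∨ (i = 4 ∧ j = 2) then -1
      else if (i = 1 ∧ j = 2) ∨ (i = 2 ∧ j = 1) ∨ (i = 2 ∧ j = 3) ∨ (i = 3 ∧ j = 2) then 0
      else cartanA i j
  | .F, _, i, j => if i = 2 ∧ j = 3 then -2 else cartanA i j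
  | .G, _, i, j => if i = 2 ∧ j = 1 then -3 else cartanA i j

/-- The standard basis vector `e_k` (1-based index, junk `0` outside `1 ≤ k ≤ n`). -/
def stdE (n k : ℕ) : EuclideanSpace ℝ (Fin n) :=
  if h : 1 ≤ k ∧ k ≤ n then EuclideanSpace.single ⟨k - 1, by omega⟩ 1 else 0

/-- The labels `B`, `C`, `D` of the classical non-`A` types. -/
inductive BCD | B | C | D
deriving DecidableEq

/-- The root set of `B_n` / `C_n` / `D_n` in the standard realization. -/
def bcdRoots (t : BCD) (n : ℕ) : Set (EuclideanSpace ℝ (Fin n)) :=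
  {v | (∃ i j : ℕ, 1 ≤ i ∧ i < j ∧ j ≤ n ∧
          (v = stdE n i - stdE n j ∨ v = -(stdE n i - stdE n j) ∨
           v = stdE n i + stdE n j ∨ v = -(stdE n i + stdE n j))) ∨
       (match t with
        | .B => ∃ i : ℕ, 1 ≤ i ∧ i ≤ n ∧ (v = stdE n i ∨ v = -stdE n i)
        | .C => ∃ i : ℕ, 1 ≤ i ∧ i ≤ n ∧ (v = (2:ℝ) • stdE n i ∨ v = -((2:ℝ) • stdE n i))
        | .D => False)}

/-- The positive roots of `B_n` / `C_n` / `D_n` in the standard realization. -/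
def bcdPos (t : BCD) (n : ℕ) : Set (EuclideanSpace ℝ (Fin n)) :=
  {v | (∃ i j : ℕ, 1 ≤ i ∧ i < j ∧ j ≤ n ∧
          (v = stdE n i - stdE n j ∨ v = stdE n i + stdE n j)) ∨
       (match t with
        | .B => ∃ i : ℕ, 1 ≤ i ∧ i ≤ n ∧ v = stdE n i
        | .C => ∃ i : ℕ, 1 ≤ i ∧ i ≤ n ∧ v = (2:ℝ) • stdE n i
        | .D => False)}

/-- The simple roots of `B_n` / `C_n` / `D_n` in the standard realization. -/
def bcdSimple (t : BCD) (n : ℕ) : Set (EuclideanSpace ℝ (Fin n)) :=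
  {v | (∃ i : ℕ, 1 ≤ i ∧ i < n ∧ v = stdE n i - stdE n (i + 1)) ∨
       (match t with
        | .B => v = stdE n n
        | .C => v = (2:ℝ) • stdE n n
        | .D => v = stdE n (n - 1) + stdE n n)}

/-- The simple root `α_k` of `B_n` / `C_n` / `D_n` (1-based index `k`). -/
def bcdAlpha (t : BCD) (n k : ℕ) : EuclideanSpace ℝ (Fin n) :=
  if k < n then stdE n k - stdE n (k + 1)
  else match t with
  | .B => stdE n n
  | .C => (2:ℝ) • stdE n n
  | .D => stdE n (n - 1) + stdE n n

/-!
The sum `θ(l)` is antisymmetric under `s_α` for `α ∈ Φ_I`, so `θ(s_β l) = 0` as soon as `s_β l` is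
orthogonal to some root of `Φ_I`. This settles one implication.

For the other, let `β ∈ Ψ⁺⁺`. In type `A` there is a family of vectors `E` such that every root is
a difference `E i - E j` and its reflection permutes the family by the transposition of `i` and `j`;
the vectors `E m` are constructed by prescribing their pairings with the simple coroots. In the
coordinates `m ↦ l (E m)`, the group `W_I` acts by permutations preserving the blocks of `Φ_I`, and
a weight that is regular for `Φ_I` has pairwise distinct coordinates on each block. If
`w s_β' l = s_β l` with `w ∈ W_I` and `β'` positive, then comparing the coordinates at the two
indices transposed by `s_β` forces `β' = β` and `w = 1`. Hence `e^(s_β l)` occurs in the sum with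
coefficient exactly `1`, and the sum is nonzero.
-/

open scoped Pointwise

/-! ### Reflections -/

section Reflections

omit [FiniteDimensional ℝ V] in
lemma inner_coroot (v α : V) : ⟪v, coroot α⟫ = 2 / ⟪α, α⟫ * ⟪v, α⟫ := real_inner_smul_right ..

lemma reflV_apply (α v : V) : reflV α v = v - ⟪v, coroot α⟫ • α := by
  unfold reflV
  split_ifs with h
  · simp [inner_self_eq_zero.mp h]
  · simp [Module.reflection_apply, corootForm]

lemma reflV_self (α : V) : reflV α α = -α := by
  obtain rfl | h := eq_or_ne α 0
  · simp
  · rw [reflV_apply, inner_coroot, div_mul_cancel₀ _ (inner_self_ne_zero.mpr h), two_smul]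
    abel

lemma reflV_reflV (α v : V) : reflV α (reflV α v) = v := by
  rw [reflV_apply α v, map_sub, map_smul, reflV_self, reflV_apply]
  simp

lemma reflV_mul_self (α : V) : reflV α * reflV α = 1 :=
  LinearEquiv.ext (reflV_reflV α)

lemma reflV_inv (α : V) : (reflV α)⁻¹ = reflV α :=
  inv_eq_of_mul_eq_one_left (reflV_mul_self α)

lemma reflV_neg (α : V) : reflV (-α) = reflV α := by
  ext v
  simp [reflV_apply, inner_coroot]

lemma inner_reflV_left (α u v : V) : ⟪reflV α u, v⟫ = ⟪u, reflV α v⟫ := by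
  simp only [reflV_apply, inner_coroot, inner_sub_left, inner_sub_right, real_inner_smul_left,
    real_inner_smul_right, real_inner_comm v α]
  ring

lemma coroot_reflV (α β : V) : coroot (reflV α β) = reflV α (coroot β) := by
  simp only [coroot, map_smul, inner_reflV_left, reflV_reflV]

lemma reflV_reflV_apply (α β v : V) :
    reflV (reflV α β) v = reflV α (reflV β (reflV α v)) := by
  rw [reflV_apply (reflV α β), coroot_reflV, ← inner_reflV_left, reflV_apply β, map_sub,
    reflV_reflV, map_smul]

omit [FiniteDimensional ℝ V] in
lemma wAct_mul (w u : V ≃ₗ[ℝ] V) (l : HStar V) : wAct (w * u) l = wAct w (wAct u l) := rfl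

omit [FiniteDimensional ℝ V] in
lemma wAct_apply (w : V ≃ₗ[ℝ] V) (l : HStar V) (v : V) : wAct w l v = l (w⁻¹ v) := rfl

lemma wAct_reflV (β : V) (l : HStar V) : wAct (reflV β) l = sRefl β l := by
  ext v
  rw [wAct_apply, reflV_inv, reflV_apply, inner_coroot, real_inner_comm β v]
  simp only [sRefl, emb, coroot, map_sub, map_smul, LinearMap.sub_apply, LinearMap.smul_apply,
    LinearMap.coe_mk, AddHom.coe_mk, Complex.real_smul, smul_eq_mul]
  push_cast
  ring

lemma sRefl_apply (β : V) (l : HStar V) (v : V) : sRefl β l v = l (reflV β v) := by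
  rw [← wAct_reflV, wAct_apply, reflV_inv]

end Reflections

/-! ### Signs of roots and of Weyl group elements -/

lemma map_units_smul {F M N : Type*} [AddGroup M] [AddGroup N] [FunLike F M N]
    [AddMonoidHomClass F M N] (f : F) (u : ℤˣ) (v : M) : f (u • v) = u • f v := by
  simp only [Units.smul_def, map_zsmul]

namespace RootSys

variable (S : RootSys V)

lemma neg_mem {α : V} (h : α ∈ S.Φ) : -α ∈ S.Φ :=
  reflV_self α ▸ S.refl_mem α h α h

/-- The group of linear automorphisms of `V` that permute the roots. -/
def aut : Subgroup (V ≃ₗ[ℝ] V) := MulAction.stabilizer (V ≃ₗ[ℝ] V) (S.Φ : Set V)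

variable {S}

lemma mem_aut_iff {w : V ≃ₗ[ℝ] V} : w ∈ S.aut ↔ ∀ α ∈ S.Φ, w α ∈ S.Φ :=
  MulAction.mem_stabilizer_set' S.Φ.finite_toSet

lemma reflV_mem_aut {α : V} (h : α ∈ S.Φ) : reflV α ∈ S.aut :=
  mem_aut_iff.mpr (S.refl_mem α h)

lemma weyl_le_aut {Φ' : Set V} (h : Φ' ⊆ S.Φ) : weyl Φ' ≤ S.aut := by
  refine (Subgroup.closure_le _).mpr ?_
  rintro _ ⟨α, hα, rfl⟩
  exact reflV_mem_aut (h hα)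

lemma aut_finite : (S.aut : Set (V ≃ₗ[ℝ] V)).Finite := by
  let restrict (w : S.aut) (α : S.Φ) : S.Φ := ⟨w.1 α, mem_aut_iff.mp w.2 α α.2⟩
  have hinj : Function.Injective restrict := fun w u h ↦ by
    refine Subtype.ext (LinearEquiv.toLinearMap_injective ?_)
    exact LinearMap.ext_on S.span_eq_top fun α hα ↦ congrArg Subtype.val (congrFun h ⟨α, hα⟩)
  have := Finite.of_injective restrict hinj
  exact Set.toFinite _

variable (S)

/-- The sign of a root: `1` on positive roots and `-1` on negative roots (and, as a junk value,
on all other vectors). -/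
def sign (v : V) : ℤˣ := if v ∈ S.pos then 1 else -1

/-- The positive one among the two roots `v` and `-v`. -/
def absRoot (v : V) : V := S.sign v • v

variable {S}

lemma sign_of_pos {α : V} (h : α ∈ S.pos) : S.sign α = 1 := if_pos h

lemma sign_neg {α : V} (h : α ∈ S.Φ) : S.sign (-α) = -S.sign α := by
  by_cases hα : α ∈ S.pos
  · simp [sign, hα, S.not_both α hα]
  · simp [sign, hα, (S.mem_pos_or α h).resolve_left hα]

lemma sign_units_smul (u : ℤˣ) {α : V} (h : α ∈ S.Φ) : S.sign (u • α) = u * S.sign α := by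
  obtain rfl | rfl := Int.units_eq_one_or u
  · simp
  · simpa using sign_neg h

lemma absRoot_of_pos {α : V} (h : α ∈ S.pos) : S.absRoot α = α := by
  rw [absRoot, sign_of_pos h, one_smul]

lemma absRoot_units_smul (u : ℤˣ) {α : V} (h : α ∈ S.Φ) : S.absRoot (u • α) = S.absRoot α := by
  rw [absRoot, sign_units_smul u h, mul_comm, mul_smul, smul_smul u, Int.units_mul_self, one_smul,
    absRoot]

lemma absRoot_mem_pos {α : V} (h : α ∈ S.Φ) : S.absRoot α ∈ S.pos := by
  by_cases hα : α ∈ S.pos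
  · rwa [absRoot_of_pos hα]
  · simpa [absRoot, sign, hα] using (S.mem_pos_or α h).resolve_left hα

lemma sign_map_absRoot {w : V ≃ₗ[ℝ] V} (hw : w ∈ S.aut) {α : V} (h : α ∈ S.Φ) :
    S.sign (w (S.absRoot α)) = S.sign (w α) * S.sign α := by
  rw [absRoot, map_units_smul, sign_units_smul _ (mem_aut_iff.mp hw α h), mul_comm]

lemma absRoot_map_absRoot {w : V ≃ₗ[ℝ] V} (hw : w ∈ S.aut) {α : V} (h : α ∈ S.Φ) :
    S.absRoot (w (S.absRoot α)) = S.absRoot (w α) := by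
  change S.absRoot (w (S.sign α • α)) = _
  rw [map_units_smul, absRoot_units_smul _ (mem_aut_iff.mp hw α h)]

lemma absRoot_inv_map_absRoot_map {w : V ≃ₗ[ℝ] V} (hw : w ∈ S.aut) {β : V} (hβ : β ∈ S.pos) :
    S.absRoot (w⁻¹ (S.absRoot (w β))) = β := by
  rw [absRoot_map_absRoot (inv_mem hw) (mem_aut_iff.mp hw β (S.pos_subset hβ)),
    ← LinearEquiv.mul_apply, inv_mul_cancel, LinearEquiv.coe_one, id, absRoot_of_pos hβ]

lemma neg_one_pow_len (w : V ≃ₗ[ℝ] V) : (-1 : ℤˣ) ^ len S w = ∏ β ∈ S.pos, S.sign (w β) := by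
  simp only [sign, Finset.prod_ite, Finset.prod_const_one, one_mul, Finset.prod_const]
  rw [len, ← Set.ncard_coe_finset, Finset.coe_filter]
  rfl

lemma neg_one_pow_len_mul {w u : V ≃ₗ[ℝ] V} (hw : w ∈ S.aut) (hu : u ∈ S.aut) :
    (-1 : ℤˣ) ^ len S (w * u) = (-1) ^ len S w * (-1) ^ len S u := by
  have hmem {u : V ≃ₗ[ℝ] V} (hu : u ∈ S.aut) {β : V} (hβ : β ∈ S.pos) : u β ∈ S.Φ :=
    mem_aut_iff.mp hu β (S.pos_subset hβ)
  have hreindex : ∏ β ∈ S.pos, S.sign (w (S.absRoot (u β))) = ∏ β ∈ S.pos, S.sign (w β) :=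
    Finset.prod_bij' (fun β _ ↦ S.absRoot (u β)) (fun β _ ↦ S.absRoot (u⁻¹ β))
      (fun β hβ ↦ absRoot_mem_pos (hmem hu hβ))
      (fun β hβ ↦ absRoot_mem_pos (hmem (inv_mem hu) hβ))
      (fun β hβ ↦ absRoot_inv_map_absRoot_map hu hβ)
      (fun β hβ ↦ by simpa using absRoot_inv_map_absRoot_map (inv_mem hu) hβ)
      (fun β _ ↦ rfl)
  rw [neg_one_pow_len, neg_one_pow_len, neg_one_pow_len, ← hreindex, ← Finset.prod_mul_distrib]
  refine Finset.prod_congr rfl fun β hβ ↦ ?_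
  rw [sign_map_absRoot hw (hmem hu hβ), mul_assoc, Int.units_mul_self, mul_one,
    LinearEquiv.mul_apply]

lemma eq_of_reflV_eq_neg {α β : V} (hα : α ∈ S.pos) (hβ : β ∈ S.pos) (h : reflV α β = -β) :
    β = α := by
  have hmul : (⟪β, coroot α⟫ / 2) • α = β := by
    rw [reflV_apply, sub_eq_iff_eq_add, eq_neg_add_iff_add_eq, ← two_smul ℝ] at h
    rw [div_eq_inv_mul, mul_smul, ← h, inv_smul_smul₀ two_ne_zero]
  obtain hc | hc := S.reduced α (S.pos_subset hα) _ (hmul ▸ S.pos_subset hβ)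
  · rw [← hmul, hc, one_smul]
  · rw [hc, neg_one_smul] at hmul
    exact absurd (hmul ▸ hβ) (S.not_both α hα)

-- The involution `β ↦ |s_α β|` pairs off the positive roots other than `α` that `s_α` makes
-- negative.
lemma neg_one_pow_len_reflV_of_pos {α : V} (hα : α ∈ S.pos) :
    (-1 : ℤˣ) ^ len S (reflV α) = -1 := by
  have hαΦ := S.pos_subset hα
  have haut := reflV_mem_aut hαΦ
  have hinvol {β : V} (hβ : β ∈ S.pos) : S.absRoot (reflV α (S.absRoot (reflV α β))) = β := by
    simpa only [reflV_inv] using absRoot_inv_map_absRoot_map haut hβ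
  have hothers : ∏ β ∈ S.pos.erase α, S.sign (reflV α β) = 1 := by
    refine Finset.prod_involution (fun β _ ↦ S.absRoot (reflV α β)) ?_ ?_ ?_ ?_ <;>
      intro β hβ <;> obtain ⟨hne, hβ⟩ := Finset.mem_erase.mp hβ <;>
      have hmem := S.refl_mem α hαΦ β (S.pos_subset hβ)
    · rw [sign_map_absRoot haut hmem, reflV_reflV, sign_of_pos hβ, one_mul, Int.units_mul_self]
    · intro hsign hfix
      rw [absRoot, (Int.units_eq_one_or _).resolve_left hsign, Units.neg_smul, one_smul,
        neg_eq_iff_eq_neg] at hfix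
      exact hne (eq_of_reflV_eq_neg hα hβ hfix)
    · refine Finset.mem_erase.mpr ⟨fun heq ↦ hne ?_, absRoot_mem_pos hmem⟩
      rw [← hinvol hβ, heq, reflV_self, ← one_smul ℤˣ α, ← Units.neg_smul,
        absRoot_units_smul _ hαΦ, absRoot_of_pos hα]
      simp
    · exact hinvol hβ
  rw [neg_one_pow_len, ← Finset.mul_prod_erase _ _ hα, hothers, reflV_self, sign_neg hαΦ,
    sign_of_pos hα, mul_one]

lemma neg_one_pow_len_reflV {α : V} (hα : α ∈ S.Φ) : (-1 : ℤˣ) ^ len S (reflV α) = -1 := by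
  obtain h | h := S.mem_pos_or α hα
  · exact neg_one_pow_len_reflV_of_pos h
  · rw [← reflV_neg]
    exact neg_one_pow_len_reflV_of_pos h

end RootSys

/-! ### The alternating sums `θ` -/

section Theta

variable {S : RootSys V} {I : Finset V}

lemma weyl_PhiI_le_aut : weyl (PhiI S I) ≤ S.aut :=
  RootSys.weyl_le_aut (Set.sep_subset _ _)

lemma weyl_PhiI_finite : (weyl (PhiI S I) : Set (V ≃ₗ[ℝ] V)).Finite :=
  RootSys.aut_finite.subset weyl_PhiI_le_aut

lemma reflV_mem_weyl {Φ' : Set V} {α : V} (h : α ∈ Φ') : reflV α ∈ weyl Φ' :=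
  Subgroup.subset_closure ⟨α, h, rfl⟩

lemma theta_sRefl {α : V} (hα : α ∈ PhiI S I) (l : HStar V) :
    theta S I (sRefl α l) = -theta S I l := by
  have hmul {w : V ≃ₗ[ℝ] V} (hw : w ∈ weyl (PhiI S I)) : w * reflV α ∈ weyl (PhiI S I) :=
    mul_mem hw (reflV_mem_weyl hα)
  have hcancel (w : V ≃ₗ[ℝ] V) : w * reflV α * reflV α = w := by
    rw [mul_assoc, reflV_mul_self, mul_one]
  have hsign {w : V ≃ₗ[ℝ] V} (hw : w ∈ weyl (PhiI S I)) :
      (-1 : ℤ) ^ len S (w * reflV α) = -(-1) ^ len S w := by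
    have h := RootSys.neg_one_pow_len_mul (weyl_PhiI_le_aut hw) (RootSys.reflV_mem_aut hα.1)
    rw [RootSys.neg_one_pow_len_reflV hα.1, mul_neg_one] at h
    simpa using congrArg Units.val h
  rw [theta, theta, ← finsum_mem_neg_distrib _ weyl_PhiI_finite]
  refine finsum_mem_eq_of_bijOn (· * reflV α)
    ⟨fun w hw ↦ hmul hw, mul_left_injective _ |>.injOn, fun w hw ↦ ⟨_, hmul hw, hcancel w⟩⟩ ?_
  intro w hw
  rw [hsign hw, wAct_mul, wAct_reflV, Finsupp.single_neg, neg_neg]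

lemma theta_eq_zero {α : V} (hα : α ∈ PhiI S I) {l : HStar V} (h : l α = 0) :
    theta S I l = 0 := by
  have hfix : sRefl α l = l := by simp [sRefl, coroot, h]
  exact self_eq_neg.mp ((congrArg (theta S I) hfix).symm.trans (theta_sRefl hα l))

lemma theta_apply (l m : HStar V) :
    theta S I l m = ∑ᶠ w ∈ {w | w ∈ weyl (PhiI S I) ∧ wAct w l = m}, (-1 : ℤ) ^ len S w := by
  have hcoeff := (Finsupp.applyAddHom m).map_finsum_mem (M := HStar V →₀ ℤ)
    (fun w ↦ Finsupp.single (wAct w l) ((-1 : ℤ) ^ len S w)) (weyl_PhiI_finite (S := S) (I := I))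
  refine hcoeff.trans ?_
  refine finsum_congr fun w ↦ ?_
  by_cases hw : w ∈ weyl (PhiI S I) <;> by_cases hm : wAct w l = m <;> simp [hw, hm]

lemma len_one : len S 1 = 0 := by
  simp [len]

end Theta

/-! ### Simple roots -/

namespace RootSys

variable (S : RootSys V)

lemma span_simple : Submodule.span ℝ (S.Δ : Set V) = ⊤ := by
  have hpos {β : V} (hβ : β ∈ S.pos) : β ∈ Submodule.span ℝ (S.Δ : Set V) := by
    obtain ⟨c, -, rfl⟩ := S.simple_gen β hβ
    exact Submodule.sum_smul_mem _ _ fun a ha ↦ Submodule.subset_span ha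
  rw [eq_top_iff, ← S.span_eq_top, Submodule.span_le]
  intro α hα
  obtain h | h := S.mem_pos_or α hα
  · exact hpos h
  · exact (Submodule.neg_mem_iff _).mp (hpos h)

/-- The simple roots as a basis of `V`; the positive roots have nonnegative coordinates in it. -/
def simpleBasis : Module.Basis S.Δ ℝ V :=
  Module.Basis.mk S.simple_indep (by simpa using S.span_simple.ge)

/-- The height of a vector: the sum of its coordinates in the basis of simple roots. -/
def height : V →ₗ[ℝ] ℝ := S.simpleBasis.constr ℝ 1

variable {S}

lemma simpleBasis_apply (a : S.Δ) : S.simpleBasis a = a := by simp [simpleBasis]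

lemma height_simple {a : V} (ha : a ∈ S.Δ) : S.height a = 1 := by
  simpa [height, simpleBasis_apply] using
    S.simpleBasis.constr_basis ℝ (1 : S.Δ → ℝ) ⟨a, ha⟩

lemma simpleBasis_repr_nonneg {β : V} (hβ : β ∈ S.pos) (a : S.Δ) :
    0 ≤ S.simpleBasis.repr β a := by
  obtain ⟨c, hc, hsum⟩ := S.simple_gen β hβ
  have hbasis : β = ∑ b : S.Δ, c b • S.simpleBasis b := by
    simp only [simpleBasis_apply]
    rw [hsum, Finset.sum_coe_sort S.Δ fun b ↦ c b • b]
  rw [hbasis, S.simpleBasis.repr_sum_self fun b : S.Δ ↦ c b]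
  exact hc a a.2

lemma simpleBasis_repr_simple {a : V} (ha : a ∈ S.Δ) :
    S.simpleBasis.repr a = Finsupp.single ⟨a, ha⟩ 1 := by
  rw [← S.simpleBasis.repr_self, simpleBasis_apply]

lemma exists_simple_inner_coroot_pos {β : V} (hβ : β ∈ S.pos) :
    ∃ a ∈ S.Δ, 0 < ⟪β, coroot a⟫ := by
  by_contra! h
  have hnonpos : ⟪β, β⟫ ≤ 0 := by
    nth_rw 2 [← S.simpleBasis.sum_repr β]
    rw [inner_sum]
    refine Finset.sum_nonpos fun a _ ↦ ?_
    rw [simpleBasis_apply, real_inner_smul_right]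
    refine mul_nonpos_of_nonneg_of_nonpos (simpleBasis_repr_nonneg hβ a) ?_
    have hself : 0 < ⟪(a : V), a⟫ :=
      real_inner_self_pos.mpr (S.ne_zero a (S.pos_subset (S.simple_subset a.2)))
    exact nonpos_of_mul_nonpos_right (inner_coroot β a ▸ h a a.2) (by positivity)
  exact S.ne_zero β (S.pos_subset hβ) (real_inner_self_nonpos.mp hnonpos)

lemma exists_simpleBasis_repr_pos_of_ne {a β : V} (ha : a ∈ S.Δ) (hβ : β ∈ S.pos) (h : β ≠ a) :
    ∃ b : S.Δ, (b : V) ≠ a ∧ 0 < S.simpleBasis.repr β b := by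
  by_contra! hle
  have hzero (b : S.Δ) (hb : b ≠ ⟨a, ha⟩) : S.simpleBasis.repr β b = 0 :=
    (hle b fun hba ↦ hb (Subtype.ext hba)).antisymm (simpleBasis_repr_nonneg hβ b)
  have hsmul : S.simpleBasis.repr β ⟨a, ha⟩ • a = β := by
    conv_rhs => rw [← S.simpleBasis.sum_repr β]
    rw [Finset.sum_eq_single ⟨a, ha⟩ (fun b _ hb ↦ by rw [hzero b hb, zero_smul]) (by simp),
      simpleBasis_apply]
  have haΦ := S.pos_subset (S.simple_subset ha)
  obtain hc | hc := S.reduced a haΦ _ (hsmul ▸ S.pos_subset hβ)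
  · exact h (by rw [← hsmul, hc, one_smul])
  · exact absurd (simpleBasis_repr_nonneg hβ ⟨a, ha⟩) (by rw [hc]; norm_num)

lemma reflV_mem_pos {a β : V} (ha : a ∈ S.Δ) (hβ : β ∈ S.pos) (h : β ≠ a) :
    reflV a β ∈ S.pos := by
  obtain ⟨b, hba, hb⟩ := exists_simpleBasis_repr_pos_of_ne ha hβ h
  have hcoord : S.simpleBasis.repr (reflV a β) b = S.simpleBasis.repr β b := by
    simp [reflV_apply, simpleBasis_repr_simple ha, Subtype.ext_iff, hba.symm]
  have hmem := S.refl_mem a (S.pos_subset (S.simple_subset ha)) β (S.pos_subset hβ)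
  refine (S.mem_pos_or _ hmem).resolve_right fun hneg ↦ ?_
  have hnonneg := simpleBasis_repr_nonneg hneg b
  rw [map_neg, Finsupp.neg_apply, hcoord] at hnonneg
  linarith

lemma pos_induction {P : V → Prop} (simple : ∀ a ∈ S.Δ, P a)
    (reflect : ∀ a ∈ S.Δ, ∀ β ∈ S.pos, P β → P (reflV a β)) : ∀ β ∈ S.pos, P β := by
  by_contra! hex
  obtain ⟨β, hβ, hmin⟩ := (S.pos.filter (¬P ·)).exists_min_image S.height
    (hex.imp fun _ ↦ Finset.mem_filter.mpr)
  obtain ⟨hβpos, hPβ⟩ := Finset.mem_filter.mp hβ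
  obtain ⟨a, ha, hinner⟩ := exists_simple_inner_coroot_pos hβpos
  have hne : β ≠ a := fun h ↦ hPβ (h ▸ simple a ha)
  have hlower : S.height (reflV a β) < S.height β := by
    rw [reflV_apply, map_sub, map_smul, height_simple ha, smul_eq_mul, mul_one]
    exact sub_lt_self _ hinner
  have hP : P (reflV a β) := by
    by_contra hP
    exact (hmin _ (Finset.mem_filter.mpr ⟨reflV_mem_pos ha hβpos hne, hP⟩)).not_gt hlower
  exact hPβ (reflV_reflV a β ▸ reflect a ha _ (reflV_mem_pos ha hβpos hne) hP)

lemma eq_of_inner_coroot_simple_eq {u v : V} (h : ∀ a ∈ S.Δ, ⟪u, coroot a⟫ = ⟪v, coroot a⟫) :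
    u = v := by
  refine InnerProductSpace.ext_inner_right_basis S.simpleBasis fun a ↦ ?_
  have ha : ⟪(a : V), a⟫ ≠ 0 :=
    inner_self_ne_zero.mpr (S.ne_zero a (S.pos_subset (S.simple_subset a.2)))
  have hcoroot := h a a.2
  rw [inner_coroot, inner_coroot] at hcoroot
  rw [simpleBasis_apply, mul_left_cancel₀ (div_ne_zero two_ne_zero ha) hcoroot]

variable (S) in
lemma exists_inner_coroot_simple_eq (c : V → ℝ) : ∃ v, ∀ a ∈ S.Δ, ⟪v, coroot a⟫ = c a := by
  have := FiniteDimensional.complete ℝ V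
  let f : V →ₗ[ℝ] ℝ := S.simpleBasis.constr ℝ fun a ↦ ⟪(a : V), a⟫ / 2 * c a
  refine ⟨(InnerProductSpace.toDual ℝ V).symm f.toContinuousLinearMap, fun a ha ↦ ?_⟩
  have hf : f a = ⟪a, a⟫ / 2 * c a := by
    simpa only [simpleBasis_apply] using S.simpleBasis.constr_basis ℝ
      (fun a ↦ ⟪(a : V), a⟫ / 2 * c a) ⟨a, ha⟩
  have haa : ⟪a, a⟫ ≠ 0 :=
    inner_self_ne_zero.mpr (S.ne_zero a (S.pos_subset (S.simple_subset ha)))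
  rw [inner_coroot, InnerProductSpace.toDual_symm_apply, LinearMap.coe_toContinuousLinearMap', hf]
  field_simp

end RootSys

section Regularity

variable {S : RootSys V} {I : Finset V} {l : HStar V}

omit [FiniteDimensional ℝ V] in
lemma re_pos_of_isPosInt_coroot {α : V} (h : IsPosInt (l (coroot α))) : 0 < (l α).re := by
  obtain ⟨n, hn, heq⟩ := h
  have hre : 2 / ⟪α, α⟫ * (l α).re = n := by
    rw [← Complex.re_ofReal_mul, ← Complex.real_smul, ← map_smul, ← coroot, heq, Complex.intCast_re]
  exact pos_of_mul_pos_right (hre ▸ Int.cast_pos.mpr hn)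
    (div_nonneg zero_le_two real_inner_self_nonneg)

lemma simpleBasis_repr_eq_zero_of_mem_PhiI (hI : I ⊆ S.Δ) {α : V} (hα : α ∈ PhiI S I)
    {a : S.Δ} (ha : (a : V) ∉ I) : S.simpleBasis.repr α a = 0 := by
  have hspan : α ∈ Submodule.span ℝ (S.simpleBasis '' {b | (b : V) ∈ I}) := by
    have himage : S.simpleBasis '' {b | (b : V) ∈ I} = I := by
      ext v
      simpa [RootSys.simpleBasis_apply] using fun hv ↦ hI hv
    rw [himage]
    exact Submodule.span_subset_span ℤ ℝ _ hα.2
  by_contra hne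
  exact ha (S.simpleBasis.mem_span_image.mp hspan (Finsupp.mem_support_iff.mpr hne))

lemma re_pos_of_mem_LambdaP (hI : I ⊆ S.Δ) (hl : l ∈ LambdaP (I : Set V)) {α : V}
    (hα : α ∈ PhiI S I) (hpos : α ∈ S.pos) : 0 < (l α).re := by
  have hrepr : (l α).re = ∑ a : S.Δ, S.simpleBasis.repr α a * (l a).re := by
    conv_lhs => rw [← S.simpleBasis.sum_repr α]
    simp [RootSys.simpleBasis_apply]
  have hnonneg (a : S.Δ) : 0 ≤ S.simpleBasis.repr α a * (l a).re := by
    by_cases ha : (a : V) ∈ I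
    · exact mul_nonneg (RootSys.simpleBasis_repr_nonneg hpos a)
        (re_pos_of_isPosInt_coroot (hl a ha)).le
    · rw [simpleBasis_repr_eq_zero_of_mem_PhiI hI hα ha, zero_mul]
  obtain ⟨a, ha⟩ : ∃ a, S.simpleBasis.repr α a ≠ 0 := by
    by_contra! hzero
    exact S.ne_zero α hα.1 (S.simpleBasis.repr.map_eq_zero_iff.mp (Finsupp.ext hzero))
  have haI : (a : V) ∈ I := by
    by_contra haI
    exact ha (simpleBasis_repr_eq_zero_of_mem_PhiI hI hα haI)
  rw [hrepr]
  exact Finset.sum_pos' (fun b _ ↦ hnonneg b) ⟨a, Finset.mem_univ a,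
    mul_pos ((RootSys.simpleBasis_repr_nonneg hpos a).lt_of_ne' ha)
      (re_pos_of_isPosInt_coroot (hl a haI))⟩

lemma isRegularOn_PhiI_of_mem_LambdaP (hI : I ⊆ S.Δ) (hl : l ∈ LambdaP (I : Set V)) :
    IsRegularOn (PhiI S I) l := by
  intro α hα hzero
  obtain h | h := S.mem_pos_or α hα.1
  · simpa [hzero] using re_pos_of_mem_LambdaP hI hl hα h
  · have hneg : -α ∈ PhiI S I := ⟨S.neg_mem hα.1, neg_mem hα.2⟩
    simpa [hzero] using re_pos_of_mem_LambdaP hI hl hneg h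

end Regularity

/-! ### Transpositions and injectivity on classes -/

section Transpositions

variable {ι X : Type*} {r : Setoid ι} {x : ι → X} {i j p q : ι}

/-- The function `x` is injective on each class of the equivalence relation `r`. For the coordinates
of a weight and the blocks of a root subsystem of type `A`, this expresses regularity. -/
def InjOnClasses (r : Setoid ι) (x : ι → X) : Prop :=
  ∀ ⦃a b⦄, r a b → x a = x b → a = b

lemma InjOnClasses.ne_of_rel_left (h : InjOnClasses r (x ∘ Equiv.swap i j)) (hr : ¬r i j)
    (hij : x i ≠ x j) {m : ι} (hm : r i m) : x j ≠ x m := by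
  obtain rfl | hmi := eq_or_ne m i
  · exact hij.symm
  · have hmj : m ≠ j := fun heq ↦ hr (heq ▸ hm)
    exact fun heq ↦ hmi (h hm (by simpa [Equiv.swap_apply_of_ne_of_ne hmi hmj])).symm

lemma InjOnClasses.ne_of_rel_right (h : InjOnClasses r (x ∘ Equiv.swap i j)) (hr : ¬r i j)
    (hij : x i ≠ x j) {m : ι} (hm : r j m) : x i ≠ x m :=
  InjOnClasses.ne_of_rel_left (by rwa [Equiv.swap_comm]) (fun h ↦ hr (r.symm h)) hij.symm hm

lemma swap_eq_swap_of_sym2_eq (h : s(p, q) = s(i, j)) : Equiv.swap p q = Equiv.swap i j := by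
  obtain ⟨rfl, rfl⟩ | ⟨rfl, rfl⟩ := Sym2.eq_iff.mp h
  · rfl
  · exact Equiv.swap_comm ..

lemma mem_sym2_of_swap_apply_ne {m : ι} (h : Equiv.swap p q m ≠ m) : m ∈ s(p, q) := by
  by_contra hm
  rw [Sym2.mem_iff, not_or] at hm
  exact h (Equiv.swap_apply_of_ne_of_ne hm.1 hm.2)

-- On the class of `i` the function `x` omits the value `x j`, so `σ⁻¹ i`, where `x ∘ swap p q`
-- takes this value, is moved by `swap p q`; the same holds for `σ⁻¹ j`, and thus
-- `{p, q} = {σ⁻¹ i, σ⁻¹ j}`.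
lemma InjOnClasses.sym2_eq_and_eq_one {σ : Equiv.Perm ι} (hx : InjOnClasses r x)
    (hswap : InjOnClasses r (x ∘ Equiv.swap i j)) (hr : ¬r i j) (hij : x i ≠ x j)
    (hσ : ∀ m, r (σ m) m) (h : ∀ m, x (Equiv.swap i j (σ m)) = x (Equiv.swap p q m)) :
    s(p, q) = s(i, j) ∧ σ = 1 := by
  obtain ⟨m, hm⟩ := σ.surjective i
  obtain ⟨n, hn⟩ := σ.surjective j
  have hxm : x (Equiv.swap p q m) = x j := by rw [← h, hm, Equiv.swap_apply_left]
  have hxn : x (Equiv.swap p q n) = x i := by rw [← h, hn, Equiv.swap_apply_right]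
  have hm_mem : m ∈ s(p, q) := mem_sym2_of_swap_apply_ne fun heq ↦
    hswap.ne_of_rel_left hr hij (hm ▸ hσ m) (by rw [← hxm, heq])
  have hn_mem : n ∈ s(p, q) := mem_sym2_of_swap_apply_ne fun heq ↦
    hswap.ne_of_rel_right hr hij (hn ▸ hσ n) (by rw [← hxn, heq])
  have hmn : m ≠ n := fun heq ↦ hij (by rw [← hm, ← hn, heq])
  have hmnpq : s(p, q) = s(m, n) := (Sym2.mem_and_mem_iff hmn).mp ⟨hm_mem, hn_mem⟩
  rw [swap_eq_swap_of_sym2_eq hmnpq] at hxm hxn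
  have hni : j = n := hx (hn ▸ hσ n) (by rw [← hxm, Equiv.swap_apply_left])
  have hmi : i = m := hx (hm ▸ hσ m) (by rw [← hxn, Equiv.swap_apply_right])
  have hpq : s(p, q) = s(i, j) := by rw [hmnpq, ← hmi, ← hni]
  refine ⟨hpq, Equiv.ext fun m ↦ hswap (hσ m) ?_⟩
  rw [Function.comp_apply, h, swap_eq_swap_of_sym2_eq hpq]
  rfl

end Transpositions

/-! ### Type `A` coordinates -/

section Coordinates

variable {ι : Type*} {E : ι → V} {i j p q : ι} {α β : V}

/-- The vector `α` is `E i - E j` and its reflection permutes the family `E` by the transposition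
of `i` and `j`. -/
def IsSwapRoot (E : ι → V) (i j : ι) (α : V) : Prop :=
  α = E i - E j ∧ ∀ m, reflV α (E m) = E (Equiv.swap i j m)

/-- The family `E` realizes each element of `Φ` as a root of type `A`, that is, as a difference
`E i - E j` whose reflection acts on the family by a transposition. The vectors `E i` may
be linearly dependent. -/
def IsTypeACoords (Φ : Set V) (E : ι → V) : Prop :=
  ∀ α ∈ Φ, ∃ i j, IsSwapRoot E i j α

lemma IsSwapRoot.neg (h : IsSwapRoot E i j α) : IsSwapRoot E j i (-α) := by
  refine ⟨by rw [h.1, neg_sub], fun m ↦ ?_⟩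
  rw [reflV_neg, h.2, Equiv.swap_comm]

lemma IsSwapRoot.reflV (hα : IsSwapRoot E i j α) (hβ : IsSwapRoot E p q β) :
    IsSwapRoot E (Equiv.swap i j p) (Equiv.swap i j q) (reflV α β) := by
  refine ⟨by rw [hβ.1, map_sub, hα.2, hα.2], fun m ↦ ?_⟩
  rw [reflV_reflV_apply, hα.2, hβ.2, hα.2, Equiv.swap_apply_apply]
  rfl

variable {S : RootSys V} {Φ' : Set V}

lemma IsSubsystem.neg_mem (hΦ' : IsSubsystem S Φ') (h : α ∈ Φ') : -α ∈ Φ' :=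
  reflV_self α ▸ hΦ'.2 α h α h

/-- The partition of the index set into the blocks of a subsystem `Φ'`: two indices are equivalent
if they are equal or their difference is an element of `Φ'`. -/
def blocks (E : ι → V) (hΦ' : IsSubsystem S Φ') : Setoid ι where
  r i j := i = j ∨ ∃ α ∈ Φ', IsSwapRoot E i j α
  iseqv := by
    refine ⟨fun i ↦ Or.inl rfl, ?_, ?_⟩
    · rintro i j (rfl | ⟨α, hα, hij⟩)
      · exact Or.inl rfl
      · exact Or.inr ⟨-α, hΦ'.neg_mem hα, hij.neg⟩
    · rintro i j k (rfl | ⟨α, hα, hij⟩) (rfl | ⟨β, hβ, hjk⟩)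
      · exact Or.inl rfl
      · exact Or.inr ⟨β, hβ, hjk⟩
      · exact Or.inr ⟨α, hα, hij⟩
      obtain rfl | hki := eq_or_ne k i
      · exact Or.inl rfl
      obtain rfl | hkj := eq_or_ne k j
      · exact Or.inr ⟨α, hα, hij⟩
      have hik := hij.reflV hjk
      rw [Equiv.swap_apply_right, Equiv.swap_apply_of_ne_of_ne hki hkj] at hik
      exact Or.inr ⟨_, hΦ'.2 α hα β hβ, hik⟩

lemma IsRegularOn.injOnClasses {l : HStar V} (h : IsRegularOn Φ' l) (hΦ' : IsSubsystem S Φ') :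
    InjOnClasses (blocks E hΦ') (l ∘ E) := by
  rintro a b (rfl | ⟨α, hα, hab⟩) heq
  · rfl
  · exact absurd (by rw [hab.1, map_sub, sub_eq_zero]; exact heq) (h α hα)

lemma IsSwapRoot.blocks_swap_apply (hΦ' : IsSubsystem S Φ') (hα : α ∈ Φ')
    (h : IsSwapRoot E i j α) (m : ι) : blocks E hΦ' (Equiv.swap i j m) m := by
  have hij : blocks E hΦ' i j := Or.inr ⟨α, hα, h⟩
  rw [Equiv.swap_apply_def]
  split_ifs with hi hj
  · exact hi ▸ (blocks E hΦ').symm hij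
  · exact hj ▸ hij
  · exact (blocks E hΦ').refl m

lemma IsTypeACoords.exists_perm_of_mem_weyl (hE : IsTypeACoords (S.Φ : Set V) E)
    (hΦ' : IsSubsystem S Φ') {w : V ≃ₗ[ℝ] V} (hw : w ∈ weyl Φ') :
    ∃ σ : Equiv.Perm ι, (∀ m, w (E m) = E (σ m)) ∧ ∀ m, blocks E hΦ' (σ m) m := by
  induction hw using Subgroup.closure_induction with
  | mem w hw =>
    obtain ⟨α, hα, rfl⟩ := hw
    obtain ⟨i, j, hij⟩ := hE α (hΦ'.1 hα)
    exact ⟨Equiv.swap i j, hij.2, hij.blocks_swap_apply hΦ' hα⟩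
  | one => exact ⟨1, fun m ↦ rfl, (blocks E hΦ').refl⟩
  | mul w u _ _ hw hu =>
    obtain ⟨σ, hσ, hσ_rel⟩ := hw
    obtain ⟨τ, hτ, hτ_rel⟩ := hu
    refine ⟨σ * τ, fun m ↦ ?_, fun m ↦ (blocks E hΦ').trans (hσ_rel (τ m)) (hτ_rel m)⟩
    rw [LinearEquiv.mul_apply, hτ, hσ, Equiv.Perm.mul_apply]
  | inv w _ hw =>
    obtain ⟨σ, hσ, hσ_rel⟩ := hw
    refine ⟨σ⁻¹, fun m ↦ ?_, fun m ↦ (blocks E hΦ').symm (by simpa using hσ_rel (σ⁻¹ m))⟩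
    rw [LinearEquiv.coe_inv, LinearEquiv.symm_apply_eq, hσ, ← Equiv.Perm.mul_apply, mul_inv_cancel,
      Equiv.Perm.one_apply]

lemma IsTypeACoords.linearEquiv_ext (hE : IsTypeACoords (S.Φ : Set V) E) {w u : V ≃ₗ[ℝ] V}
    (h : ∀ m, w (E m) = u (E m)) : w = u := by
  refine LinearEquiv.toLinearMap_injective (LinearMap.ext_on S.span_eq_top fun α hα ↦ ?_)
  obtain ⟨i, j, hij⟩ := hE α hα
  simp [hij.1, h]

lemma IsTypeACoords.eq_and_eq_one_of_wAct_sRefl_eq (hE : IsTypeACoords (S.Φ : Set V) E)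
    (hΦ' : IsSubsystem S Φ') {l : HStar V} {β' : V} (hβ : β ∈ S.pos) (hβ' : β' ∈ S.pos)
    (hβΦ' : β ∉ Φ') (hlβ : l β ≠ 0) (hl : IsRegularOn Φ' l) (hsl : IsRegularOn Φ' (sRefl β l))
    {w : V ≃ₗ[ℝ] V} (hw : w ∈ weyl Φ') (h : wAct w (sRefl β' l) = sRefl β l) :
    β' = β ∧ w = 1 := by
  obtain ⟨i, j, hij⟩ := hE β (S.pos_subset hβ)
  obtain ⟨p, q, hpq⟩ := hE β' (S.pos_subset hβ')
  obtain ⟨σ, hσ, hσ_rel⟩ := hE.exists_perm_of_mem_weyl hΦ' hw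
  have hx : l (E i) ≠ l (E j) := by rwa [Ne, ← sub_eq_zero, ← map_sub, ← hij.1]
  have hrel : ¬blocks E hΦ' i j := by
    rintro (rfl | ⟨α, hα, hα_swap⟩)
    · exact hx rfl
    · exact hβΦ' (by rwa [hij.1, ← hα_swap.1])
  have hsl_swap : sRefl β l ∘ E = (l ∘ E) ∘ Equiv.swap i j :=
    funext fun m ↦ by simp [sRefl_apply, hij.2]
  have hcoord (m : ι) : l (E (Equiv.swap i j (σ m))) = l (E (Equiv.swap p q m)) := by
    rw [← hij.2, ← hpq.2, ← sRefl_apply, ← sRefl_apply, ← h, ← hσ, wAct_apply,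
      ← LinearEquiv.mul_apply, inv_mul_cancel, LinearEquiv.coe_one, id]
  obtain ⟨hsym, rfl⟩ := (hl.injOnClasses hΦ').sym2_eq_and_eq_one
    (hsl_swap ▸ hsl.injOnClasses hΦ') hrel hx hσ_rel hcoord
  refine ⟨?_, hE.linearEquiv_ext hσ⟩
  obtain ⟨rfl, rfl⟩ | ⟨rfl, rfl⟩ := Sym2.eq_iff.mp hsym
  · rw [hpq.1, hij.1]
  · exact absurd (by rwa [hij.1, neg_sub, ← hpq.1]) (S.not_both β hβ)

end Coordinates

/-! ### Existence of type `A` coordinates -/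

section Existence

variable {ι : Type*} {E : ι → V} {i j : ι} {α : V} {S : RootSys V}

/-- The root `e_i - e_j` in the standard realization of type `A` on `ι → ℝ`. -/
def stdRoot (i j : ι) : ι → ℝ := Pi.single i 1 - Pi.single j 1

lemma IsSwapRoot.of_inner_coroot (hij : i ≠ j) (hα : α = E i - E j)
    (h : ∀ m, ⟪E m, coroot α⟫ = stdRoot i j m) : IsSwapRoot E i j α := by
  refine ⟨hα, fun m ↦ ?_⟩
  rw [reflV_apply, h, hα, Equiv.swap_apply_def, stdRoot]
  split_ifs with hi hj
  · simp [hi, hij]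
  · simp [hj, hij.symm]
  · simp [hi, hj]

lemma IsTypeACoords.of_simple (h : ∀ a ∈ S.Δ, ∃ i j, IsSwapRoot E i j a) :
    IsTypeACoords (S.Φ : Set V) E := by
  have hpos : ∀ β ∈ S.pos, ∃ i j, IsSwapRoot E i j β := by
    refine RootSys.pos_induction h fun a ha β _ ⟨p, q, hβ⟩ ↦ ?_
    obtain ⟨i, j, ha⟩ := h a ha
    exact ⟨_, _, ha.reflV hβ⟩
  intro α hα
  obtain hα | hα := S.mem_pos_or α hα
  · exact hpos α hα
  · obtain ⟨i, j, hij⟩ := hpos _ hα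
    exact ⟨j, i, neg_neg α ▸ hij.neg⟩

lemma exists_isTypeACoords_of_inner_coroot_simple (lo hi : V → ι) (hne : ∀ a ∈ S.Δ, lo a ≠ hi a)
    (h : ∀ a ∈ S.Δ, ∀ b ∈ S.Δ,
      ⟪a, coroot b⟫ = stdRoot (lo b) (hi b) (lo a) - stdRoot (lo b) (hi b) (hi a)) :
    ∃ E, IsTypeACoords (S.Φ : Set V) (E : ι → V) := by
  choose E hE using fun m ↦ S.exists_inner_coroot_simple_eq fun b ↦ stdRoot (lo b) (hi b) m
  have hdiff {a : V} (ha : a ∈ S.Δ) : a = E (lo a) - E (hi a) :=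
    RootSys.eq_of_inner_coroot_simple_eq fun b hb ↦ by
      rw [h a ha b hb, inner_sub_left, hE _ b hb, hE _ b hb]
  exact ⟨E, IsTypeACoords.of_simple fun a ha ↦
    ⟨lo a, hi a, .of_inner_coroot (hne a ha) (hdiff ha) fun m ↦ hE m a ha⟩⟩

lemma mem_component_self (h : α ∈ S.Φ) : α ∈ component S α :=
  ⟨h, Relation.ReflTransGen.refl⟩

lemma component_eq_of_inner_ne_zero {β : V} (hα : α ∈ S.Φ) (hβ : β ∈ S.Φ) (h : ⟪α, β⟫ ≠ 0) :
    component S α = component S β := by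
  have hsub {α β : V} (hα : α ∈ S.Φ) (hβ : β ∈ S.Φ) (h : ⟪α, β⟫ ≠ 0) :
      component S β ⊆ component S α :=
    fun γ hγ ↦ ⟨hγ.1, hγ.2.head ⟨hα, hβ, h⟩⟩
  exact (hsub hβ hα (by rwa [real_inner_comm])).antisymm (hsub hα hβ h)

/-- Every irreducible component of the root system is of type `A`: its simple roots can be
enumerated so that the Cartan matrix becomes that of type `A`. -/
def IsTypeA (S : RootSys V) : Prop :=
  ∀ β ∈ (S.Φ : Set V), ∃ (k : ℕ) (e : Fin k → V), Function.Injective e ∧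
    Set.range e = (S.Δ : Set V) ∩ component S β ∧
    ∀ a b : Fin k, ⟪e a, coroot (e b)⟫ = (cartanA ((a : ℕ) + 1) ((b : ℕ) + 1) : ℝ)

lemma IsTypeA.exists_label (hS : IsTypeA S) :
    ∃ n : V → ℕ, ∀ a ∈ S.Δ, ∀ b ∈ S.Δ, component S a = component S b →
      ⟪a, coroot b⟫ = (cartanA (n a) (n b) : ℝ) := by
  have hcomponent : ∀ c ∈ component S '' S.Φ, ∃ n : V → ℕ, ∀ a ∈ (S.Δ : Set V) ∩ c,
      ∀ b ∈ (S.Δ : Set V) ∩ c, ⟪a, coroot b⟫ = (cartanA (n a) (n b) : ℝ) := by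
    rintro _ ⟨β, hβ, rfl⟩
    obtain ⟨k, e, -, hrange, hcartan⟩ := hS β hβ
    have hindex : ∀ a ∈ (S.Δ : Set V) ∩ component S β,
        ∃ n : ℕ, ∃ i : Fin k, e i = a ∧ n = (i : ℕ) + 1 := by
      intro a ha
      obtain ⟨i, hi⟩ := hrange.symm ▸ ha
      exact ⟨_, i, hi, rfl⟩
    choose! n hn using hindex
    refine ⟨n, fun a ha b hb ↦ ?_⟩
    obtain ⟨i, rfl, hi⟩ := hn a ha
    obtain ⟨j, rfl, hj⟩ := hn b hb
    rw [hi, hj, hcartan]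
  choose! n hn using hcomponent
  refine ⟨fun a ↦ n (component S a) a, fun a ha b hb hab ↦ ?_⟩
  have haΦ := S.pos_subset (S.simple_subset ha)
  have hbΦ := S.pos_subset (S.simple_subset hb)
  change ⟪a, coroot b⟫ = (cartanA (n (component S a) a) (n (component S b) b) : ℝ)
  rw [← hab]
  exact hn _ ⟨a, haΦ, rfl⟩ a ⟨ha, mem_component_self haΦ⟩ b ⟨hb, hab ▸ mem_component_self hbΦ⟩

lemma IsTypeA.exists_isTypeACoords (hS : IsTypeA S) :
    ∃ E : Set V × ℕ → V, IsTypeACoords (S.Φ : Set V) E := by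
  obtain ⟨n, hn⟩ := hS.exists_label
  refine exists_isTypeACoords_of_inner_coroot_simple (fun a ↦ (component S a, n a))
    (fun a ↦ (component S a, n a + 1)) (by simp) fun a ha b hb ↦ ?_
  by_cases hab : component S a = component S b
  · rw [hn a ha b hb hab]
    simp only [stdRoot, cartanA, Pi.sub_apply, Pi.single_apply, Prod.mk.injEq, hab, true_and]
    split_ifs <;> first | omega | norm_num
  · have horth : ⟪a, b⟫ = 0 := by
      by_contra hne
      exact hab (component_eq_of_inner_ne_zero (S.pos_subset (S.simple_subset ha))
        (S.pos_subset (S.simple_subset hb)) hne)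
    simp [inner_coroot, horth, stdRoot, hab]

end Existence

/-! ### Jantzen's criterion in type `A` -/

section Main

variable {S : RootSys V} {I : Finset V} {l : HStar V}

lemma isSubsystem_PhiI : IsSubsystem S (PhiI S I) := by
  refine ⟨Set.sep_subset _ _, fun α hα β hβ ↦ ⟨S.refl_mem α hα.1 β hβ.1, ?_⟩⟩
  obtain ⟨n, hn⟩ := S.crystallographic α hα.1 β hβ.1
  rw [reflV_apply, hn, Int.cast_smul_eq_zsmul]
  exact sub_mem hβ.2 (zsmul_mem hα.2 n)

lemma IsPosInt.ne_zero {z : ℂ} (h : IsPosInt z) : z ≠ 0 := by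
  obtain ⟨n, hn, rfl⟩ := h
  exact Int.cast_ne_zero.mpr hn.ne'

lemma finsum_theta_eq_zero_of_PsiPP_eq_empty (h : PsiPP S (PhiI S I) S.Φ l = ∅) :
    ∑ᶠ β ∈ PsiP S (PhiI S I) S.Φ l, theta S I (sRefl β l) = 0 := by
  refine finsum_mem_of_eqOn_zero fun β hβ ↦ ?_
  have hsing : ¬∀ α ∈ PhiI S I, sRefl β l α ≠ 0 :=
    fun hreg ↦ Set.eq_empty_iff_forall_notMem.mp h β ⟨hβ, hreg⟩
  push Not at hsing
  obtain ⟨α, hα, hzero⟩ := hsing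
  exact theta_eq_zero hα hzero

lemma theta_sRefl_apply_sRefl (hS : IsTypeA S) (hl : IsRegularOn (PhiI S I) l) {β β' : V}
    (hβ : β ∈ PsiPP S (PhiI S I) S.Φ l) (hβ' : β' ∈ S.pos) :
    theta S I (sRefl β' l) (sRefl β l) = if β' = β then 1 else 0 := by
  obtain ⟨E, hE⟩ := hS.exists_isTypeACoords
  obtain ⟨⟨⟨-, hβpos⟩, hβI, hint⟩, hreg⟩ := hβ
  have hlβ : l β ≠ 0 := fun h ↦ hint.ne_zero (by rw [coroot, map_smul, h, smul_zero])
  have huniq {w : V ≃ₗ[ℝ] V} (hw : w ∈ weyl (PhiI S I))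
      (h : wAct w (sRefl β' l) = sRefl β l) : β' = β ∧ w = 1 :=
    hE.eq_and_eq_one_of_wAct_sRefl_eq isSubsystem_PhiI hβpos hβ' hβI hlβ hl hreg hw h
  rw [theta_apply]
  split_ifs with hβ'β
  · have hone : {w | w ∈ weyl (PhiI S I) ∧ wAct w (sRefl β' l) = sRefl β l} = {1} :=
      Set.eq_singleton_iff_unique_mem.mpr
        ⟨⟨one_mem _, by rw [hβ'β]; rfl⟩, fun w hw ↦ (huniq hw.1 hw.2).2⟩
    rw [hone, finsum_mem_singleton, len_one, pow_zero]
  · have hempty : {w | w ∈ weyl (PhiI S I) ∧ wAct w (sRefl β' l) = sRefl β l} = ∅ :=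
      Set.eq_empty_iff_forall_notMem.mpr fun w hw ↦ hβ'β (huniq hw.1 hw.2).1
    rw [hempty, finsum_mem_empty]

lemma finsum_theta_apply_sRefl (hS : IsTypeA S) (hl : IsRegularOn (PhiI S I) l) {β : V}
    (hβ : β ∈ PsiPP S (PhiI S I) S.Φ l) :
    (∑ᶠ β' ∈ PsiP S (PhiI S I) S.Φ l, theta S I (sRefl β' l)) (sRefl β l) = 1 := by
  have hfin : (PsiP S (PhiI S I) S.Φ l).Finite :=
    S.pos.finite_toSet.subset fun β' hβ' ↦ hβ'.1.2
  rw [finsum_mem_eq_finite_toFinset_sum _ hfin, Finsupp.finsetSum_apply,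
    Finset.sum_congr rfl fun β' hβ' ↦
      theta_sRefl_apply_sRefl hS hl hβ (hfin.mem_toFinset.mp hβ').1.2,
    Finset.sum_ite_eq' _ β, if_pos (hfin.mem_toFinset.mpr hβ.1)]

end Main

theorem statement_18_general (S : RootSys V) (hS : IsTypeA S) (I : Finset V) (l : HStar V)
    (hl : IsRegularOn (PhiI S I) l) :
    ∑ᶠ β ∈ PsiP S (PhiI S I) S.Φ l, theta S I (sRefl β l) = 0 ↔
      PsiPP S (PhiI S I) S.Φ l = ∅ := by
  refine ⟨fun hsum ↦ Set.eq_empty_iff_forall_notMem.mpr fun β hβ ↦ ?_,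
    finsum_theta_eq_zero_of_PsiPP_eq_empty⟩
  have hcoeff := finsum_theta_apply_sRefl hS hl hβ
  rw [hsum, Finsupp.zero_apply] at hcoeff
  exact zero_ne_one hcoeff

/-- Theorem 7.4 (Jantzen, Satz 4): if every irreducible component of `Φ` is of type `A`
(each component's simple roots admit an enumeration whose Cartan matrix is of type `A`),
then for `λ ∈ Λ_I⁺` the sum `Σ_{β ∈ Ψ_λ⁺} θ(s_β λ)` vanishes iff `Ψ_λ⁺⁺ = ∅`. -/
theorem statement_18 {V : Type*} [NormedAddCommGroup V] [InnerProductSpace ℝ V]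
    [FiniteDimensional ℝ V]
    (S : RootSys V)
    (htypeA : ∀ β ∈ (S.Φ : Set V), ∃ (k : ℕ) (e : Fin k → V), Function.Injective e ∧
      Set.range e = (S.Δ : Set V) ∩ component S β ∧
      ∀ a b : Fin k, ⟪e a, coroot (e b)⟫ = (cartanA ((a : ℕ) + 1) ((b : ℕ) + 1) : ℝ))
    (I : Finset V) (hI : I ⊆ S.Δ)
    (lam : HStar V) (hlam : lam ∈ LambdaP (I : Set V)) :
    (∑ᶠ β ∈ PsiP S (PhiI S I) (S.Φ : Set V) lam, theta S I (sRefl β lam)) = 0 ↔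
      PsiPP S (PhiI S I) (S.Φ : Set V) lam = ∅ := by
  exact statement_18_general S htypeA I lam (isRegularOn_PhiI_of_mem_LambdaP hI hlam)

end JantzenGVM
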